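/- Let F ∈ ℂ[x_0, x_1, x_2, x_3] be a homogeneous form of degree 3 and let M(F) := M(∂F/∂x_0, ∂F/∂x_1, ∂F/∂x_2, ∂F/∂x_3) be the Nanson matrix of its four partial derivatives. Then det M(F) = 0 if and only if there exists a nonzero point p ∈ ℂ^4 at which all four partial derivatives of F vanish, i.e. if and only if the projective cubic surface V(F) ⊂ P^3 is singular. -/

import Mathlib

/-!
The equivalence holds for the Nanson matrix of any four quaternary quadrics `Q` over `ℂ`; only
`Q i = ∂F/∂X i` homogeneous of degree 2 is used. Let `J` be the Jacobian determinant and `I` the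
ideal of the quadrics. By Euler, `jac Q • X = 2 Q`, so Cramer's rule gives
`X j * J = 2 ∑ i, adj j i * Q i`, and differentiating this shows
`X j * ∂J/∂X k ≡ δ_jk J` modulo `I` (`X_mul_pderiv_det_jac`).

If `p ≠ 0` is a common zero of the quadrics, these two identities at `p` show that `J` and its
partials vanish at `p`. All twenty cubics then vanish at `p`, and the vector of cubic monomials at
`p` is a nonzero element of the kernel of the matrix.

Conversely, suppose that `0` is the only common zero. By the Nullstellensatz some power `N` gives
`X i ^ N = ∑ j, D i j * Q j`. A vanishing combination of the rows reads
`∑ lᵢ Qᵢ + ∑ c_k ∂J/∂X k = 0` with linear forms `lᵢ` and constants `c_k`.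

* `J ∉ I` (`det_jac_notMem`): both `D * jac Q` and the diagonal matrix of the `2 X i ^ (N - 1)` send
  `X` to `2 X ^ N`, so their determinants agree modulo the ideal `(X i ^ N)`
  (`det_sub_det_mem_powIdeal`). If `J ∈ I`, then `det D * J ∈ (X i ^ N)` by Cramer's rule for
  `D Q = X ^ N`, hence `16 ∏ X i ^ (N - 1) ∈ (X i ^ N)`, which is absurd. Multiplying the
  relation by `X j` gives `c_j J ∈ I`, so `c_j = 0`.
* The remaining relation `∑ lᵢ Qᵢ = 0` is a syzygy. As `I` contains the regular sequence
  `X i ^ N`, the first Koszul homology of `Q` vanishes, so `lᵢ ∈ I` (`koszul_syzygy_coord`,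
  `syzygy_mem_span`); `I` has no nonzero elements of degree 1, so `lᵢ = 0`.
-/

open MvPolynomial

/-- The exponent vectors of the 20 degree-3 monomials in `x₀, x₁, x₂, x₃`, in a fixed order. -/
noncomputable def cubicExp : Fin 20 → (Fin 4 →₀ ℕ) := fun m =>
  Finsupp.equivFunOnFinite.symm
    (![![3,0,0,0], ![2,1,0,0], ![2,0,1,0], ![2,0,0,1],
       ![1,2,0,0], ![1,1,1,0], ![1,1,0,1], ![1,0,2,0], ![1,0,1,1], ![1,0,0,2],
       ![0,3,0,0], ![0,2,1,0], ![0,2,0,1], ![0,1,2,0], ![0,1,1,1], ![0,1,0,2],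
       ![0,0,3,0], ![0,0,2,1], ![0,0,1,2], ![0,0,0,3]] m)

/-- The twenty cubic forms of Nanson's construction: the sixteen products `xⱼ · Qᵢ`
and the four partial derivatives of the Jacobian determinant of `Q₁, …, Q₄`. -/
noncomputable def nansonRow {K : Type*} [CommRing K]
    (Q : Fin 4 → MvPolynomial (Fin 4) K) : Fin 20 → MvPolynomial (Fin 4) K := fun r =>
  if h : (r : ℕ) < 16 then
    X (⟨(r : ℕ) % 4, by omega⟩ : Fin 4) * Q ⟨(r : ℕ) / 4, by omega⟩
  else
    pderiv (⟨(r : ℕ) - 16, by omega⟩ : Fin 4)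
      (Matrix.det (Matrix.of fun i j : Fin 4 => pderiv j (Q i)))

/-- Nanson's 20 × 20 matrix of four quaternary quadrics: the coefficient matrix of the
twenty cubics `nansonRow Q` with respect to the twenty degree-3 monomials. -/
noncomputable def nansonMatrix {K : Type*} [CommRing K]
    (Q : Fin 4 → MvPolynomial (Fin 4) K) : Matrix (Fin 20) (Fin 20) K :=
  Matrix.of fun r c => coeff (cubicExp c) (nansonRow Q r)

/-! ### Ideals generated by powers of variables -/

/-- The ideal generated by the powers `X k ^ N` with `k ∈ T`. -/
noncomputable def powIdeal (T : Set (Fin 4)) (N : ℕ) : Ideal (MvPolynomial (Fin 4) ℂ) :=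
  Ideal.span ((fun k => X k ^ N) '' T)

lemma mem_powIdeal {T : Set (Fin 4)} {N : ℕ} {p : MvPolynomial (Fin 4) ℂ} :
    p ∈ powIdeal T N ↔ ∀ m ∈ p.support, ∃ k ∈ T, N ≤ m k := by
  have h := @mem_ideal_span_monomial_image (Fin 4) ℂ _ p ((fun k => Finsupp.single k N) '' T)
  rw [Set.image_image] at h
  simp only [Set.exists_mem_image, Finsupp.single_le_iff] at h
  rw [← h, powIdeal]
  simp only [X_pow_eq_monomial]

lemma X_pow_mem_powIdeal {T : Set (Fin 4)} (N : ℕ) {k : Fin 4} (hk : k ∈ T) :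
    (X k ^ N : MvPolynomial (Fin 4) ℂ) ∈ powIdeal T N :=
  Ideal.subset_span ⟨k, hk, rfl⟩

/-- A variable outside `T` is not a zero divisor modulo the powers of the variables in `T`. -/
lemma mem_powIdeal_of_X_pow_mul {T : Set (Fin 4)} {N n : ℕ} {i : Fin 4} (hi : i ∉ T)
    {p : MvPolynomial (Fin 4) ℂ} (h : X i ^ n * p ∈ powIdeal T N) : p ∈ powIdeal T N := by
  rw [mem_powIdeal] at h ⊢
  intro m hm
  obtain ⟨k, hk, hN⟩ := h (Finsupp.single i n + m) (by
    rw [mem_support_iff] at hm ⊢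
    rwa [X_pow_eq_monomial, coeff_monomial_mul, one_mul])
  refine ⟨k, hk, ?_⟩
  have hne : i ≠ k := fun e => hi (e ▸ hk)
  simpa [Finsupp.single_apply, hne] using hN

lemma prod_X_pow_notMem_powIdeal (n : ℕ) {c : ℂ} (hc : c ≠ 0) :
    C c * ∏ i, X i ^ n ∉ powIdeal Set.univ (n + 1) := by
  intro h
  rw [mem_powIdeal] at h
  have e : (C c * ∏ i, X i ^ n : MvPolynomial (Fin 4) ℂ)
      = monomial (Finsupp.equivFunOnFinite.symm fun _ => n) c := by
    rw [monomial_eq, Finsupp.prod_fintype]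
    · simp
    · simp
  rw [e, support_monomial, if_neg hc] at h
  obtain ⟨k, -, hk⟩ := h _ (Finset.mem_singleton_self _)
  simp at hk

/-! ### Syzygies of the quadrics -/

/-- One coordinate of the vanishing of the first Koszul homology of `q`: if `a`, `b`, `c`, `d` are
coefficient vectors such that `f₁ = a ⬝ q, f₂ = b ⬝ q, f₃ = c ⬝ q, f₄ = d ⬝ q` is a regular
sequence, then for every syzygy `l` of `q` the entry `l₃` is a combination of the entries of `q`.
The proof lifts `l` to `a ∧ l`, `b ∧ a ∧ l` and `c ∧ b ∧ a ∧ l`, which are Koszul cycles modulo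
`f₁`, `(f₁, f₂)` and `(f₁, f₂, f₃)`, shows that the last one lies in `(f₁, f₂, f₃)`, and descends
by dividing successively by `f₃`, `f₂` and `f₁`. -/
lemma koszul_syzygy_coord {A : Type*} [CommRing A] [IsDomain A]
    (q0 q1 q2 q3 a0 a1 a2 a3 b0 b1 b2 b3 c0 c1 c2 c3 d0 d1 d2 d3 l0 l1 l2 l3 f1 f2 f3 f4 : A)
    (ha : a0 * q0 + a1 * q1 + a2 * q2 + a3 * q3 = f1)
    (hb : b0 * q0 + b1 * q1 + b2 * q2 + b3 * q3 = f2)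
    (hc : c0 * q0 + c1 * q1 + c2 * q2 + c3 * q3 = f3)
    (hd : d0 * q0 + d1 * q1 + d2 * q2 + d3 * q3 = f4)
    (hl : l0 * q0 + l1 * q1 + l2 * q2 + l3 * q3 = 0)
    (h1 : f1 ≠ 0)
    (h2 : ∀ y u, f2 * y = u * f1 → ∃ u, y = u * f1)
    (h3 : ∀ y u v, f3 * y = u * f1 + v * f2 → ∃ u v, y = u * f1 + v * f2)
    (h4 : ∀ y u v w, f4 * y = u * f1 + v * f2 + w * f3 →
      ∃ u v w, y = u * f1 + v * f2 + w * f3) :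
    ∃ w0 w1 w2, l3 = w0 * q0 + w1 * q1 + w2 * q2 := by
  -- `D x y z` is the determinant of the 3 × 3 matrix with rows `x`, `y`, `z`
  let D : A → A → A → A → A → A → A → A → A → A := fun x0 x1 x2 y0 y1 y2 z0 z1 z2 =>
    x0 * (y1 * z2 - y2 * z1) - x1 * (y0 * z2 - y2 * z0) + x2 * (y0 * z1 - y1 * z0)
  -- `m0, …, m3` are the components of `b ∧ a ∧ l`, and `g` is `c ∧ b ∧ a ∧ l`
  obtain ⟨m0, hm0⟩ : ∃ m, m = D b1 b2 b3 a1 a2 a3 l1 l2 l3 := ⟨_, rfl⟩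
  obtain ⟨m1, hm1⟩ : ∃ m, m = - D b0 b2 b3 a0 a2 a3 l0 l2 l3 := ⟨_, rfl⟩
  obtain ⟨m2, hm2⟩ : ∃ m, m = D b0 b1 b3 a0 a1 a3 l0 l1 l3 := ⟨_, rfl⟩
  obtain ⟨m3, hm3⟩ : ∃ m, m = - D b0 b1 b2 a0 a1 a2 l0 l1 l2 := ⟨_, rfl⟩
  obtain ⟨g, hg⟩ : ∃ g, g = c0 * m0 + c1 * m1 + c2 * m2 + c3 * m3 := ⟨_, rfl⟩
  have e0 : q0 * g = f3 * m0 - f2 * D c1 c2 c3 a1 a2 a3 l1 l2 l3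
      + f1 * D c1 c2 c3 b1 b2 b3 l1 l2 l3 := by
    rw [hg, hm0, hm1, hm2, hm3, ← ha, ← hb, ← hc]
    linear_combination (-D c1 c2 c3 b1 b2 b3 a1 a2 a3) * hl
  have e1 : q1 * g = f3 * m1 + f2 * D c0 c2 c3 a0 a2 a3 l0 l2 l3
      - f1 * D c0 c2 c3 b0 b2 b3 l0 l2 l3 := by
    rw [hg, hm0, hm1, hm2, hm3, ← ha, ← hb, ← hc]
    linear_combination (D c0 c2 c3 b0 b2 b3 a0 a2 a3) * hl
  have e2 : q2 * g = f3 * m2 - f2 * D c0 c1 c3 a0 a1 a3 l0 l1 l3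
      + f1 * D c0 c1 c3 b0 b1 b3 l0 l1 l3 := by
    rw [hg, hm0, hm1, hm2, hm3, ← ha, ← hb, ← hc]
    linear_combination (-D c0 c1 c3 b0 b1 b3 a0 a1 a3) * hl
  have e3 : q3 * g = f3 * m3 + f2 * D c0 c1 c2 a0 a1 a2 l0 l1 l2
      - f1 * D c0 c1 c2 b0 b1 b2 l0 l1 l2 := by
    rw [hg, hm0, hm1, hm2, hm3, ← ha, ← hb, ← hc]
    linear_combination (D c0 c1 c2 b0 b1 b2 a0 a1 a2) * hl
  have p03 : f2 * (a0 * l3 - a3 * l0) = f1 * (b0 * l3 - b3 * l0) - q1 * m2 + q2 * m1 := by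
    rw [hm1, hm2, ← ha, ← hb]
    linear_combination (a0 * b3 - a3 * b0) * hl
  have p13 : f2 * (a1 * l3 - a3 * l1) = f1 * (b1 * l3 - b3 * l1) + q0 * m2 - q2 * m0 := by
    rw [hm0, hm2, ← ha, ← hb]
    linear_combination (a1 * b3 - a3 * b1) * hl
  have p23 : f2 * (a2 * l3 - a3 * l2) = f1 * (b2 * l3 - b3 * l2) - q0 * m1 + q1 * m0 := by
    rw [hm0, hm1, ← ha, ← hb]
    linear_combination (a2 * b3 - a3 * b2) * hl
  have hlast : f1 * l3 = q0 * (a0 * l3 - a3 * l0) + q1 * (a1 * l3 - a3 * l1)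
      + q2 * (a2 * l3 - a3 * l2) := by
    rw [← ha]
    linear_combination a3 * hl
  clear_value D
  clear hm0 hm1 hm2 hm3 hg
  obtain ⟨u, v, w, rfl⟩ := h4 g
    (d0 * D c1 c2 c3 b1 b2 b3 l1 l2 l3 - d1 * D c0 c2 c3 b0 b2 b3 l0 l2 l3
      + d2 * D c0 c1 c3 b0 b1 b3 l0 l1 l3 - d3 * D c0 c1 c2 b0 b1 b2 l0 l1 l2)
    (-d0 * D c1 c2 c3 a1 a2 a3 l1 l2 l3 + d1 * D c0 c2 c3 a0 a2 a3 l0 l2 l3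
      - d2 * D c0 c1 c3 a0 a1 a3 l0 l1 l3 + d3 * D c0 c1 c2 a0 a1 a2 l0 l1 l2)
    (d0 * m0 + d1 * m1 + d2 * m2 + d3 * m3) (by
    rw [← hd]
    linear_combination d0 * e0 + d1 * e1 + d2 * e2 + d3 * e3)
  obtain ⟨u0, v0, k0⟩ := h3 (m0 - w * q0) (q0 * u - D c1 c2 c3 b1 b2 b3 l1 l2 l3)
    (q0 * v + D c1 c2 c3 a1 a2 a3 l1 l2 l3) (by linear_combination -e0)
  obtain ⟨u1, v1, k1⟩ := h3 (m1 - w * q1) (q1 * u + D c0 c2 c3 b0 b2 b3 l0 l2 l3)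
    (q1 * v - D c0 c2 c3 a0 a2 a3 l0 l2 l3) (by linear_combination -e1)
  obtain ⟨u2, v2, k2⟩ := h3 (m2 - w * q2) (q2 * u - D c0 c1 c3 b0 b1 b3 l0 l1 l3)
    (q2 * v + D c0 c1 c3 a0 a1 a3 l0 l1 l3) (by linear_combination -e2)
  obtain ⟨w0, j0⟩ := h2 (a0 * l3 - a3 * l0 - (q2 * v1 - q1 * v2))
    (b0 * l3 - b3 * l0 - q1 * u2 + q2 * u1) (by linear_combination p03 - q1 * k2 + q2 * k1)
  obtain ⟨w1, j1⟩ := h2 (a1 * l3 - a3 * l1 - (q0 * v2 - q2 * v0))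
    (b1 * l3 - b3 * l1 + q0 * u2 - q2 * u0) (by linear_combination p13 + q0 * k2 - q2 * k0)
  obtain ⟨w2, j2⟩ := h2 (a2 * l3 - a3 * l2 - (q1 * v0 - q0 * v1))
    (b2 * l3 - b3 * l2 - q0 * u1 + q1 * u0) (by linear_combination p23 - q0 * k1 + q1 * k0)
  exact ⟨w0, w1, w2, mul_left_cancel₀ h1 (by
    linear_combination hlast + q0 * j0 + q1 * j1 + q2 * j2)⟩

open scoped Matrix

/-- The entries of a syzygy of `Q` lie in the ideal of `Q`, if this ideal contains the
regular sequence `X i ^ N`. -/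
lemma syzygy_mem_span {N : ℕ} {Q l : Fin 4 → MvPolynomial (Fin 4) ℂ}
    {D : Matrix (Fin 4) (Fin 4) (MvPolynomial (Fin 4) ℂ)}
    (hD : ∀ i, ∑ j, D i j * Q j = X i ^ N) (hl : ∑ i, l i * Q i = 0) (i : Fin 4) :
    l i ∈ Ideal.span (Set.range Q) := by
  have h2 : ∀ y u : MvPolynomial (Fin 4) ℂ, X 1 ^ N * y = u * X 0 ^ N →
      ∃ u, y = u * X 0 ^ N := by
    intro y u h
    have hy := mem_powIdeal_of_X_pow_mul (T := {0}) (i := 1) (n := N) (N := N) (p := y) (by simp)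
      (h ▸ Ideal.mul_mem_left _ _ (X_pow_mem_powIdeal N rfl))
    rw [powIdeal, Set.image_singleton, Ideal.mem_span_singleton'] at hy
    obtain ⟨a, rfl⟩ := hy
    exact ⟨a, rfl⟩
  have h3 : ∀ y u v : MvPolynomial (Fin 4) ℂ, X 2 ^ N * y = u * X 0 ^ N + v * X 1 ^ N →
      ∃ u v, y = u * X 0 ^ N + v * X 1 ^ N := by
    intro y u v h
    have hy := mem_powIdeal_of_X_pow_mul (T := {0, 1}) (i := 2) (n := N) (N := N) (p := y)
      (by simp)
      (h ▸ add_mem (Ideal.mul_mem_left _ _ (X_pow_mem_powIdeal N (by simp)))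
        (Ideal.mul_mem_left _ _ (X_pow_mem_powIdeal N (by simp))))
    rw [powIdeal, Set.image_pair, Ideal.mem_span_pair] at hy
    obtain ⟨a, b, rfl⟩ := hy
    exact ⟨a, b, rfl⟩
  have h4 : ∀ y u v w : MvPolynomial (Fin 4) ℂ,
      X 3 ^ N * y = u * X 0 ^ N + v * X 1 ^ N + w * X 2 ^ N →
      ∃ u v w, y = u * X 0 ^ N + v * X 1 ^ N + w * X 2 ^ N := by
    intro y u v w h
    have hy := mem_powIdeal_of_X_pow_mul (T := {0, 1, 2}) (i := 3) (n := N) (N := N) (p := y)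
      (by simp)
      (h ▸ add_mem (add_mem (Ideal.mul_mem_left _ _ (X_pow_mem_powIdeal N (by simp)))
        (Ideal.mul_mem_left _ _ (X_pow_mem_powIdeal N (by simp))))
        (Ideal.mul_mem_left _ _ (X_pow_mem_powIdeal N (by simp))))
    rw [powIdeal, Set.image_insert_eq, Set.image_pair, Ideal.span, Submodule.mem_span_triple] at hy
    obtain ⟨a, b, c, rfl⟩ := hy
    exact ⟨a, b, c, rfl⟩
  have h1 : (X 0 ^ N : MvPolynomial (Fin 4) ℂ) ≠ 0 := pow_ne_zero _ (X_ne_zero _)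
  -- `i0, i1, i2, i3` is any ordering of the four indices; the case needed has `i3 = i`
  have key : ∀ i0 i1 i2 i3 : Fin 4,
      (∀ f : Fin 4 → MvPolynomial (Fin 4) ℂ, ∑ j, f j = f i0 + f i1 + f i2 + f i3) →
      l i3 ∈ Ideal.span (Set.range Q) := by
    intro i0 i1 i2 i3 hs
    have hmem : ∀ j, Q j ∈ Ideal.span (Set.range Q) := fun j => Ideal.subset_span ⟨j, rfl⟩
    have hs' : ∀ (u : Fin 4 → MvPolynomial (Fin 4) ℂ) (c : MvPolynomial (Fin 4) ℂ),
        ∑ j, u j * Q j = c → u i0 * Q i0 + u i1 * Q i1 + u i2 * Q i2 + u i3 * Q i3 = c := by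
      intro u c h
      rw [← h, hs fun j => u j * Q j]
    obtain ⟨w0, w1, w2, hw⟩ := koszul_syzygy_coord (Q i0) (Q i1) (Q i2) (Q i3)
      (D 0 i0) (D 0 i1) (D 0 i2) (D 0 i3) (D 1 i0) (D 1 i1) (D 1 i2) (D 1 i3)
      (D 2 i0) (D 2 i1) (D 2 i2) (D 2 i3) (D 3 i0) (D 3 i1) (D 3 i2) (D 3 i3)
      (l i0) (l i1) (l i2) (l i3) _ _ _ _
      (hs' _ _ (hD 0)) (hs' _ _ (hD 1)) (hs' _ _ (hD 2)) (hs' _ _ (hD 3)) (hs' _ _ hl) h1 h2 h3 h4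
    rw [hw]
    exact add_mem (add_mem (Ideal.mul_mem_left _ _ (hmem _)) (Ideal.mul_mem_left _ _ (hmem _)))
      (Ideal.mul_mem_left _ _ (hmem _))
  fin_cases i
  · exact key 1 2 3 0 fun f => by rw [Fin.sum_univ_four]; ring
  · exact key 0 2 3 1 fun f => by rw [Fin.sum_univ_four]; ring
  · exact key 0 1 3 2 fun f => by rw [Fin.sum_univ_four]; ring
  · exact key 0 1 2 3 fun f => by rw [Fin.sum_univ_four]

lemma coeff_eq_zero_of_mem_span {Q : Fin 4 → MvPolynomial (Fin 4) ℂ}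
    (hQ : ∀ i, (Q i).IsHomogeneous 2) {p : MvPolynomial (Fin 4) ℂ}
    (hp : p ∈ Ideal.span (Set.range Q)) {m : Fin 4 →₀ ℕ} (hm : m.degree < 2) :
    coeff m p = 0 := by
  obtain ⟨g, rfl⟩ := Ideal.mem_span_range_iff_exists_fun.mp hp
  rw [coeff_sum]
  refine Finset.sum_eq_zero fun i _ => ?_
  rw [coeff_mul]
  refine Finset.sum_eq_zero fun x hx => ?_
  rw [(hQ i).coeff_eq_zero (d := x.2), mul_zero]
  have h := congrArg Finsupp.degree (Finset.HasAntidiagonal.mem_antidiagonal.mp hx)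
  rw [map_add] at h
  omega

/-! ### The Jacobian determinant is not in the ideal of the quadrics -/

/-- If the entries of `M X` are multiples of the corresponding `X k ^ N` and one row of `M` is
replaced by a syzygy `r` of `X`, the determinant lies in the ideal of all `X k ^ N`: by Cramer's
rule, its product with `X i` lies in the ideal of the `X k ^ N` with `k ≠ i`. -/
lemma det_updateRow_mem_powIdeal {N : ℕ}
    {M : Matrix (Fin 4) (Fin 4) (MvPolynomial (Fin 4) ℂ)} (i : Fin 4)
    {r : Fin 4 → MvPolynomial (Fin 4) ℂ} (hr : ∑ j, r j * X j = 0)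
    (hM : ∀ k, ∑ j, M k j * X j ∈ Ideal.span {(X k ^ N : MvPolynomial (Fin 4) ℂ)}) :
    (M.updateRow i r).det ∈ powIdeal Set.univ N := by
  have h : X i ^ 1 * (M.updateRow i r).det ∈ powIdeal {i}ᶜ N := by
    have e := congrFun (congrArg (· *ᵥ (X : Fin 4 → MvPolynomial (Fin 4) ℂ))
      (Matrix.adjugate_mul (M.updateRow i r))) i
    simp only [← Matrix.mulVec_mulVec, Matrix.smul_mulVec, Matrix.one_mulVec, Pi.smul_apply,
      smul_eq_mul] at e
    rw [pow_one, mul_comm, ← e, Matrix.mulVec, dotProduct]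
    refine sum_mem fun k _ => Ideal.mul_mem_left _ _ ?_
    by_cases hk : k = i
    · subst hk
      have : (M.updateRow k r *ᵥ X) k = 0 := by
        simpa [Matrix.mulVec, dotProduct] using hr
      rw [this]
      exact zero_mem _
    · have : (M.updateRow i r *ᵥ X) k = ∑ j, M k j * X j := by
        simp [Matrix.mulVec, dotProduct, Matrix.updateRow_ne hk]
      rw [this]
      exact (Ideal.span_singleton_le_iff_mem _).2 (X_pow_mem_powIdeal N (by simpa using hk)) (hM k)
  have h' := mem_powIdeal_of_X_pow_mul (by simp) h
  exact Ideal.span_mono (Set.image_mono (Set.subset_univ _)) h'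

/-- If `E X = E' X` and the `k`-th entry of this vector is a multiple of `X k ^ N` for every `k`,
then `E` and `E'` have congruent determinants modulo the ideal of all `X k ^ N`: exchange the rows
one at a time. -/
lemma det_sub_det_mem_powIdeal {N : ℕ}
    {E E' : Matrix (Fin 4) (Fin 4) (MvPolynomial (Fin 4) ℂ)}
    (hEE' : ∀ k, ∑ j, E k j * X j = ∑ j, E' k j * X j)
    (hE : ∀ k, ∑ j, E k j * X j ∈ Ideal.span {(X k ^ N : MvPolynomial (Fin 4) ℂ)}) :
    E'.det - E.det ∈ powIdeal Set.univ N := by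
  have key : ∀ s : Finset (Fin 4),
      (Matrix.of fun i => if i ∈ s then E' i else E i).det - E.det ∈ powIdeal Set.univ N := by
    intro s
    induction s using Finset.induction_on with
    | empty =>
      have : (Matrix.of fun i => if i ∈ (∅ : Finset (Fin 4)) then E' i else E i) = E := by
        ext1 i j
        simp
      rw [this, sub_self]
      exact zero_mem _
    | insert a s ha ih =>
      set M : Matrix (Fin 4) (Fin 4) (MvPolynomial (Fin 4) ℂ) :=
        Matrix.of fun i => if i ∈ s then E' i else E i with hM
      have e1 : (Matrix.of fun i => if i ∈ insert a s then E' i else E i)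
          = M.updateRow a (E a + (E' a - E a)) := by
        ext1 i j
        by_cases hi : i = a
        · subst hi
          simp
        · simp [hM, hi]
      have e2 : M.updateRow a (E a) = M := by
        ext1 i j
        by_cases hi : i = a
        · subst hi
          simp [hM, ha]
        · simp [hi]
      rw [e1, Matrix.det_updateRow_add, e2, add_sub_right_comm]
      refine add_mem ih (det_updateRow_mem_powIdeal a ?_ ?_)
      · simp [sub_mul, hEE' a]
      · intro k
        by_cases hk : k ∈ s
        · simpa [hM, hk, hEE'] using hE k
        · simpa [hM, hk] using hE k
  have : (Matrix.of fun i => if i ∈ (Finset.univ : Finset (Fin 4)) then E' i else E i) = E' := by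
    ext1 i j
    simp
  exact this ▸ key Finset.univ

/-- The Jacobian matrix of four forms. -/
noncomputable def jac (Q : Fin 4 → MvPolynomial (Fin 4) ℂ) :
    Matrix (Fin 4) (Fin 4) (MvPolynomial (Fin 4) ℂ) :=
  Matrix.of fun i j => pderiv j (Q i)

lemma jac_mulVec_X {Q : Fin 4 → MvPolynomial (Fin 4) ℂ} (hQ : ∀ i, (Q i).IsHomogeneous 2)
    (i : Fin 4) : ∑ j, jac Q i j * X j = 2 * Q i := by
  have := (hQ i).sum_X_mul_pderiv
  simp only [nsmul_eq_mul, Nat.cast_ofNat] at this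
  rw [← this]
  exact Finset.sum_congr rfl fun j _ => mul_comm _ _

/-- The Jacobian determinant is not in the ideal of the quadrics, as soon as this ideal contains
the powers of the variables. -/
lemma det_jac_notMem {n : ℕ} {Q : Fin 4 → MvPolynomial (Fin 4) ℂ}
    (hQ : ∀ i, (Q i).IsHomogeneous 2)
    {D : Matrix (Fin 4) (Fin 4) (MvPolynomial (Fin 4) ℂ)}
    (hD : ∀ i, ∑ j, D i j * Q j = X i ^ (n + 1)) :
    (jac Q).det ∉ Ideal.span (Set.range Q) := by
  intro hJ
  have hDJ : ∀ k, ∑ j, (D * jac Q) k j * X j = 2 * X k ^ (n + 1) := by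
    intro k
    have : ((D * jac Q) *ᵥ X) k = (D *ᵥ (jac Q *ᵥ X)) k := by rw [Matrix.mulVec_mulVec]
    have h2 : jac Q *ᵥ X = fun i => 2 * Q i := funext fun i => jac_mulVec_X hQ i
    rw [h2] at this
    refine this.trans ?_
    rw [← hD k, Finset.mul_sum, Matrix.mulVec, dotProduct]
    exact Finset.sum_congr rfl fun j _ => by ring
  have hdiag : ∀ k, ∑ j, (Matrix.diagonal fun i : Fin 4 =>
      (2 * X i ^ n : MvPolynomial (Fin 4) ℂ)) k j * X j = 2 * X k ^ (n + 1) := by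
    intro k
    rw [Finset.sum_eq_single k]
    · simp [pow_succ, mul_assoc]
    · intro j _ hj
      simp [Matrix.diagonal_apply_ne' _ hj]
    · simp
  have h1 := det_sub_det_mem_powIdeal (N := n + 1) (fun k => (hDJ k).trans (hdiag k).symm)
    (fun k => by rw [hDJ k]; exact Ideal.mul_mem_left _ _ (Ideal.mem_span_singleton_self _))
  have h2 : (D * jac Q).det ∈ powIdeal Set.univ (n + 1) := by
    rw [Matrix.det_mul]
    obtain ⟨c, hc⟩ := Ideal.mem_span_range_iff_exists_fun.mp hJ
    rw [← hc, Finset.mul_sum]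
    refine sum_mem fun i _ => ?_
    -- Cramer's rule: `det D • Q = adj D (D Q)`, and `D Q` is the vector of powers
    have e := congrFun (congrArg (· *ᵥ Q) (Matrix.adjugate_mul D)) i
    simp only [← Matrix.mulVec_mulVec, Matrix.smul_mulVec, Matrix.one_mulVec, Pi.smul_apply,
      smul_eq_mul] at e
    have h3 : D *ᵥ Q = fun k => X k ^ (n + 1) := funext hD
    rw [mul_left_comm, ← e, h3, Matrix.mulVec, dotProduct]
    exact Ideal.mul_mem_left _ _ (sum_mem fun k _ =>
      Ideal.mul_mem_left _ _ (X_pow_mem_powIdeal _ (Set.mem_univ k)))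
  have h3 := add_mem h1 h2
  rw [sub_add_cancel, Matrix.det_diagonal, Finset.prod_mul_distrib] at h3
  refine prod_X_pow_notMem_powIdeal n (c := 16) (by norm_num) ?_
  convert h3 using 2
  simp only [Finset.prod_const, Finset.card_univ, Fintype.card_fin]
  rw [show (2 : MvPolynomial (Fin 4) ℂ) = C 2 from rfl, ← C_pow]
  norm_num

/-! ### Partial derivatives of the Jacobian determinant -/

/-- Cramer's rule for the Euler relations `jac Q • X = 2 Q`. -/
lemma X_mul_det_jac {Q : Fin 4 → MvPolynomial (Fin 4) ℂ} (hQ : ∀ i, (Q i).IsHomogeneous 2)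
    (j : Fin 4) : X j * (jac Q).det = ∑ i, (jac Q).adjugate j i * (2 * Q i) := by
  have e := congrFun (congrArg (· *ᵥ (X : Fin 4 → MvPolynomial (Fin 4) ℂ))
    (Matrix.adjugate_mul (jac Q))) j
  simp only [← Matrix.mulVec_mulVec, Matrix.smul_mulVec, Matrix.one_mulVec, Pi.smul_apply,
    smul_eq_mul] at e
  have h2 : jac Q *ᵥ X = fun i => 2 * Q i := funext fun i => jac_mulVec_X hQ i
  rw [mul_comm, ← e, h2]
  rfl

/-- Modulo the quadrics, `X j * ∂J/∂X k` is `J` if `j = k` and `0` otherwise; obtained by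
differentiating `X_mul_det_jac`. -/
lemma X_mul_pderiv_det_jac {Q : Fin 4 → MvPolynomial (Fin 4) ℂ}
    (hQ : ∀ i, (Q i).IsHomogeneous 2) (j k : Fin 4) :
    X j * pderiv k (jac Q).det = (if j = k then (jac Q).det else 0)
      + ∑ i, (2 * pderiv k ((jac Q).adjugate j i)) * Q i := by
  have h := congrArg (pderiv k) (X_mul_det_jac hQ j)
  have e := congrFun (congrFun (Matrix.adjugate_mul (jac Q)) j) k
  rw [Matrix.mul_apply] at e
  have h2 : pderiv k (2 : MvPolynomial (Fin 4) ℂ) = 0 := pderiv_C (a := (2 : ℂ))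
  have hs : ∑ i, pderiv k ((jac Q).adjugate j i * (2 * Q i))
      = ∑ i, (2 * pderiv k ((jac Q).adjugate j i)) * Q i
        + 2 * ∑ i, (jac Q).adjugate j i * jac Q i k := by
    rw [Finset.mul_sum, ← Finset.sum_add_distrib]
    refine Finset.sum_congr rfl fun i _ => ?_
    rw [pderiv_mul, pderiv_mul, h2, jac, Matrix.of_apply]
    ring
  rw [map_sum, hs, e, pderiv_mul, pderiv_X] at h
  by_cases hjk : j = k
  · subst hjk
    simp at h ⊢
    linear_combination h
  · simp [hjk] at h ⊢
    linear_combination h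

/-! ### Powers of the variables in the ideal of the quadrics -/

/-- Nullstellensatz: if `0` is the only common zero of the quadrics, their ideal contains a common
power of the variables. -/
lemma exists_pow_eq_sum {Q : Fin 4 → MvPolynomial (Fin 4) ℂ}
    (h : ¬ ∃ p : Fin 4 → ℂ, p ≠ 0 ∧ ∀ i, eval p (Q i) = 0) :
    ∃ (n : ℕ) (D : Matrix (Fin 4) (Fin 4) (MvPolynomial (Fin 4) ℂ)),
      ∀ i, ∑ j, D i j * Q j = X i ^ (n + 1) := by
  have hrad : ∀ i : Fin 4, X i ∈ (Ideal.span (Set.range Q)).radical := by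
    intro i
    rw [← vanishingIdeal_zeroLocus_eq_radical (K := ℂ), mem_vanishingIdeal_iff]
    intro p hp
    have hp0 : p = 0 := by
      by_contra hne
      refine h ⟨p, hne, fun i => ?_⟩
      have := mem_zeroLocus_iff.mp hp (Q i) (Ideal.subset_span ⟨i, rfl⟩)
      rwa [aeval_eq_eval] at this
    simp [hp0]
  choose N hN using fun i => Ideal.mem_radical_iff.mp (hrad i)
  have hmem : ∀ i : Fin 4, X i ^ ((∑ j, N j) + 1) ∈ Ideal.span (Set.range Q) := fun i =>
    Ideal.pow_mem_of_pow_mem _ (hN i)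
      ((Finset.single_le_sum (fun _ _ => Nat.zero_le _) (Finset.mem_univ i)).trans
        (Nat.le_succ _))
  choose D hD using fun i => Ideal.mem_span_range_iff_exists_fun.mp (hmem i)
  exact ⟨_, D, hD⟩

/-! ### Cubic forms and the rows of the Nanson matrix -/

lemma exists_cubicExp_eq {m : Fin 4 →₀ ℕ} (hm : m.degree = 3) : ∃ c, cubicExp c = m := by
  have hs : m 0 + m 1 + m 2 + m 3 = 3 := by
    rwa [Finsupp.degree_eq_sum, Fin.sum_univ_four] at hm
  have key : ∀ a b c d : Fin 4, (a : ℕ) + b + c + d = 3 → ∃ r : Fin 20,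
      (![![3,0,0,0], ![2,1,0,0], ![2,0,1,0], ![2,0,0,1],
       ![1,2,0,0], ![1,1,1,0], ![1,1,0,1], ![1,0,2,0], ![1,0,1,1], ![1,0,0,2],
       ![0,3,0,0], ![0,2,1,0], ![0,2,0,1], ![0,1,2,0], ![0,1,1,1], ![0,1,0,2],
       ![0,0,3,0], ![0,0,2,1], ![0,0,1,2], ![0,0,0,3]] : Fin 20 → Fin 4 → ℕ) r
        = ![(a : ℕ), b, c, d] := by decide
  obtain ⟨r, hr⟩ := key ⟨m 0, by omega⟩ ⟨m 1, by omega⟩ ⟨m 2, by omega⟩ ⟨m 3, by omega⟩ hs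
  refine ⟨r, ?_⟩
  rw [cubicExp, hr]
  ext i
  fin_cases i <;> rfl

lemma cubicExp_injective : Function.Injective cubicExp := by
  intro r s h
  have h' := Finsupp.equivFunOnFinite.symm.injective h
  revert h'
  clear h
  revert r s
  decide

/-- A cubic form is determined by its coefficients at the exponents `cubicExp`. -/
lemma eq_sum_monomial {P : MvPolynomial (Fin 4) ℂ} (hP : P.IsHomogeneous 3) :
    P = ∑ c, monomial (cubicExp c) (coeff (cubicExp c) P) := by
  ext m
  rw [coeff_sum]
  simp only [coeff_monomial]
  by_cases hm : m.degree = 3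
  · obtain ⟨c, rfl⟩ := exists_cubicExp_eq hm
    rw [Finset.sum_eq_single c]
    · simp
    · intro b _ hb
      rw [if_neg (cubicExp_injective.ne hb)]
    · simp
  · rw [hP.coeff_eq_zero hm]
    refine (Finset.sum_eq_zero fun c _ => ?_).symm
    split_ifs with h
    · rw [h, hP.coeff_eq_zero hm]
    · rfl

lemma nansonRow_isHomogeneous {Q : Fin 4 → MvPolynomial (Fin 4) ℂ}
    (hQ : ∀ i, (Q i).IsHomogeneous 2) (r : Fin 20) : (nansonRow Q r).IsHomogeneous 3 := by
  unfold nansonRow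
  split_ifs with h
  · exact (isHomogeneous_X ℂ _).mul (hQ _)
  · refine IsHomogeneous.pderiv (n := 4) ?_
    rw [Matrix.det_apply]
    refine IsHomogeneous.sum _ _ _ fun σ _ => ?_
    have : (∏ i, (Matrix.of fun i j => pderiv j (Q i)) (σ i) i).IsHomogeneous (∑ _i : Fin 4, 1) :=
      IsHomogeneous.prod _ _ _ fun i _ => (hQ (σ i)).pderiv
    rcases Int.units_eq_one_or (Equiv.Perm.sign σ) with hσ | hσ
    · simpa [hσ] using this
    · simpa [hσ] using this.neg

/-- A combination of the Nanson rows is `∑ lᵢ Qᵢ + ∑ c_k ∂J/∂X_k` with linear forms `lᵢ`. -/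
lemma sum_nansonRow (Q : Fin 4 → MvPolynomial (Fin 4) ℂ) (v : Fin 20 → ℂ) :
    ∑ r, C (v r) * nansonRow Q r
      = ∑ i : Fin 4, (∑ j : Fin 4, C (v ⟨4 * i + j, by omega⟩) * X j) * Q i
        + ∑ k : Fin 4, C (v ⟨16 + k, by omega⟩) * pderiv k (jac Q).det := by
  rw [Fin.sum_univ_add (a := 16) (b := 4) (fun r => C (v r) * nansonRow Q r)]
  congr 1
  rw [← (finProdFinEquiv (m := 4) (n := 4)).sum_comp, Fintype.sum_prod_type]
  refine Finset.sum_congr rfl fun i _ => ?_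
  rw [Finset.sum_mul]
  refine Finset.sum_congr rfl fun j _ => ?_
  have e : Fin.castAdd 4 (finProdFinEquiv (i, j)) = (⟨4 * i + j, by omega⟩ : Fin 20) :=
    Fin.ext (by simp [finProdFinEquiv]; omega)
  have hj : (⟨(4 * (i : ℕ) + j) % 4, by omega⟩ : Fin 4) = j :=
    Fin.ext (by dsimp only; omega)
  have hi : (⟨(4 * (i : ℕ) + j) / 4, by omega⟩ : Fin 4) = i := Fin.ext (by simp; omega)
  have hrow : nansonRow Q ⟨4 * i + j, by omega⟩ = X j * Q i := by
    rw [nansonRow, dif_pos (show 4 * (i : ℕ) + j < 16 by omega)]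
    simp only [hi, hj]
  rw [e, hrow, mul_assoc]

/-! ### Both implications for arbitrary quadrics -/

lemma exists_common_zero_of_det_eq_zero {Q : Fin 4 → MvPolynomial (Fin 4) ℂ}
    (hQ : ∀ i, (Q i).IsHomogeneous 2) (hdet : (nansonMatrix Q).det = 0) :
    ∃ p : Fin 4 → ℂ, p ≠ 0 ∧ ∀ i, eval p (Q i) = 0 := by
  by_contra hno
  obtain ⟨n, D, hD⟩ := exists_pow_eq_sum hno
  obtain ⟨v, hv, hvM⟩ := Matrix.exists_vecMul_eq_zero_iff.mpr hdet
  have hmem : ∀ j, Q j ∈ Ideal.span (Set.range Q) := fun j => Ideal.subset_span ⟨j, rfl⟩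
  have aux : ∀ a b c : MvPolynomial (Fin 4) ℂ, a + (c + b) = 0 →
      a ∈ Ideal.span (Set.range Q) → b ∈ Ideal.span (Set.range Q) →
      c ∈ Ideal.span (Set.range Q) := by
    intro a b c h ha hb
    have hc : c = -(a + b) := by linear_combination h
    rw [hc]
    exact neg_mem (add_mem ha hb)
  have hsum : ∑ r, C (v r) * nansonRow Q r = 0 := by
    have hhom : (∑ r, C (v r) * nansonRow Q r).IsHomogeneous 3 :=
      IsHomogeneous.sum _ _ _ fun r _ => (nansonRow_isHomogeneous hQ r).C_mul _
    rw [eq_sum_monomial hhom]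
    refine Finset.sum_eq_zero fun c _ => ?_
    have hc := congrFun hvM c
    simp only [Matrix.vecMul, dotProduct, nansonMatrix, Matrix.of_apply, Pi.zero_apply] at hc
    simp only [coeff_sum, coeff_C_mul, hc, monomial_zero]
  rw [sum_nansonRow] at hsum
  -- multiplying the relation by `X j` isolates `c_j J` modulo the quadrics
  have hc : ∀ j : Fin 4, v ⟨16 + j, by omega⟩ = 0 := by
    intro j
    by_contra hne
    have h1 : C (v ⟨16 + j, by omega⟩) * (jac Q).det ∈ Ideal.span (Set.range Q) := by
      have h2 := congrArg (X j * ·) hsum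
      simp only [mul_add, mul_zero, Finset.mul_sum, mul_left_comm (X j) (C _),
        X_mul_pderiv_det_jac hQ] at h2
      rw [Finset.sum_add_distrib] at h2
      simp only [mul_ite, mul_zero, Finset.sum_ite_eq, Finset.mem_univ, if_true] at h2
      refine aux _ _ _ h2 (sum_mem fun i _ => ?_) (sum_mem fun k _ => sum_mem fun i _ => ?_)
      · exact Ideal.mul_mem_left _ _ (Ideal.mul_mem_left _ _ (hmem i))
      · exact Ideal.mul_mem_left _ _ (Ideal.mul_mem_left _ _ (hmem i))
    refine det_jac_notMem hQ hD ?_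
    have h2 := Ideal.mul_mem_left _ (C (v ⟨16 + j, by omega⟩)⁻¹) h1
    rwa [← mul_assoc, ← C_mul, inv_mul_cancel₀ hne, C_1, one_mul] at h2
  have hl : ∀ i j : Fin 4, v ⟨4 * i + j, by omega⟩ = 0 := by
    intro i j
    simp only [hc, C_0, zero_mul, Finset.sum_const_zero, add_zero] at hsum
    have h1 := coeff_eq_zero_of_mem_span hQ (syzygy_mem_span hD hsum i)
      (m := Finsupp.single j 1) (by simp)
    simpa [coeff_sum, coeff_C_mul, coeff_X, Finsupp.single_left_inj] using h1
  refine hv (funext fun r => ?_)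
  by_cases hr : (r : ℕ) < 16
  · have := hl ⟨r / 4, by omega⟩ ⟨r % 4, by omega⟩
    simp only [Nat.div_add_mod] at this
    exact this
  · have := hc ⟨r - 16, by omega⟩
    simp only [Nat.add_sub_cancel' (not_lt.mp hr)] at this
    exact this

lemma det_eq_zero_of_common_zero {Q : Fin 4 → MvPolynomial (Fin 4) ℂ}
    (hQ : ∀ i, (Q i).IsHomogeneous 2) {p : Fin 4 → ℂ} (hp : p ≠ 0)
    (hpQ : ∀ i, eval p (Q i) = 0) : (nansonMatrix Q).det = 0 := by
  obtain ⟨j, hj⟩ := Function.ne_iff.mp hp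
  have hJ : eval p (jac Q).det = 0 := by
    have := congrArg (eval p) (X_mul_det_jac hQ j)
    simp only [map_mul, map_sum, eval_X, hpQ, mul_zero, Finset.sum_const_zero] at this
    exact (mul_eq_zero.mp this).resolve_left hj
  have hdJ : ∀ k, eval p (pderiv k (jac Q).det) = 0 := by
    intro k
    have := congrArg (eval p) (X_mul_pderiv_det_jac hQ j k)
    simp only [map_mul, map_add, map_sum, eval_X, hpQ, mul_zero, Finset.sum_const_zero,
      apply_ite (eval p), hJ, map_zero, ite_self, add_zero] at this
    exact (mul_eq_zero.mp this).resolve_left hj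
  have hrow : ∀ r, eval p (nansonRow Q r) = 0 := by
    intro r
    unfold nansonRow
    split_ifs with h
    · simp [hpQ]
    · exact hdJ _
  refine Matrix.exists_mulVec_eq_zero_iff.mp
    ⟨fun c => eval p (monomial (cubicExp c) 1), ?_, ?_⟩
  · obtain ⟨c, hc⟩ := exists_cubicExp_eq (m := Finsupp.single j 3) (by simp)
    refine Function.ne_iff.mpr ⟨c, ?_⟩
    simp only [hc, eval_monomial, Pi.zero_apply]
    simpa using hj
  · funext r
    rw [Pi.zero_apply, ← hrow r]
    conv_rhs => rw [eq_sum_monomial (nansonRow_isHomogeneous hQ r)]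
    simp [Matrix.mulVec, dotProduct, nansonMatrix, eval_monomial]

/-- The determinant of the Nanson matrix `M(F)` of the four partial derivatives of a
quaternary cubic form `F` over ℂ vanishes if and only if the cubic surface `V(F) ⊂ ℙ³`
is singular, i.e. iff the four partials have a common nontrivial zero. -/
theorem nanson_det_of_cubic_eq_zero_iff_singular
    (F : MvPolynomial (Fin 4) ℂ) (hF : F.IsHomogeneous 3) :
    (nansonMatrix fun i => pderiv i F).det = 0 ↔
      ∃ p : Fin 4 → ℂ, p ≠ 0 ∧ ∀ i, eval p (pderiv i F) = 0 := by
  have hQ : ∀ i, (pderiv i F).IsHomogeneous 2 := fun i => hF.pderiv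
  exact ⟨exists_common_zero_of_det_eq_zero hQ,
    fun ⟨_, hp, hpQ⟩ => det_eq_zero_of_common_zero hQ hp hpQ⟩
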